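/- For every p ∈ (1,∞) and ℓ ∈ ℝ there exist constants 0 < c ≤ C such that for all ε ∈ (0,1] and all f : εℤ² → ℝ, setting N(f) := ‖f‖_{L^p_ℓ(εℤ²)} + ( ε² Σ_{x∈εℤ²} Σ_{i=1,2} ρ_ℓ(x)^p ε^{−p} |f(x+εe_i) − f(x)|^p )^{1/p}, where e₁, e₂ is the standard basis of ℝ², one has c·N(f) ≤ ‖f‖_{W^{1,p}_ℓ(εℤ²)} ≤ C·N(f); i.e., on the lattice the W^{1,p}_ℓ norm is equivalent, uniformly in ε, to the norm built from nearest-neighbour difference quotients. -/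

import Mathlib

open MeasureTheory
open scoped ENNReal

/-- The polynomial weight `ρ_ℓ(y) = (1+|y|²)^{-ℓ/2}` on `ℝ²`. -/
noncomputable def rho2 (ℓ : ℝ) (y : ℝ × ℝ) : ℝ := (1 + y.1 ^ 2 + y.2 ^ 2) ^ (-ℓ / 2)

/-- The lattice point `(εn₁, εn₂) ∈ εℤ² ⊂ ℝ²` indexed by `n ∈ ℤ²`. -/
noncomputable def pt (ε : ℝ) (n : ℤ × ℤ) : ℝ × ℝ := (ε * (n.1 : ℝ), ε * (n.2 : ℝ))

/-- The square `Q_ε(z) = (z₁-ε/2, z₁+ε/2] × (z₂-ε/2, z₂+ε/2]`. -/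
def Qeps (ε : ℝ) (z : ℝ × ℝ) : Set (ℝ × ℝ) :=
  Set.Ioc (z.1 - ε / 2) (z.1 + ε / 2) ×ˢ Set.Ioc (z.2 - ε / 2) (z.2 + ε / 2)

/-- The discretization operator `D^ε f(z) = ε⁻² ∫_{Q_ε(z)} f(x) dx`. -/
noncomputable def Deps (ε : ℝ) (f : ℝ × ℝ → ℝ) (n : ℤ × ℤ) : ℝ :=
  (ε ^ 2)⁻¹ * ∫ x in Qeps ε (pt ε n), f x

/-- The index of the cell `Q_ε(z)` containing `t` in one coordinate:
`t ∈ (εn - ε/2, εn + ε/2]` iff `n = ⌈t/ε - 1/2⌉`. -/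
noncomputable def cellIdx (ε t : ℝ) : ℤ := ⌈t / ε - 1 / 2⌉

/-- The extension operator `E^ε`, producing the piecewise constant function with
`E^ε f = f(z)` on `Q_ε(z)`. -/
noncomputable def Eeps (ε : ℝ) (f : ℤ × ℤ → ℝ) (x : ℝ × ℝ) : ℝ :=
  f (cellIdx ε x.1, cellIdx ε x.2)

/-- The weighted norm `‖g‖_{L^p_ℓ(ℝ²)} = (∫_{ℝ²} |ρ_ℓ(x) g(x)|^p dx)^{1/p}`,
valued in `ℝ≥0∞`. -/
noncomputable def lpNormR2 (p ℓ : ℝ) (g : ℝ × ℝ → ℝ) : ℝ≥0∞ :=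
  (∫⁻ x : ℝ × ℝ, ENNReal.ofReal (|rho2 ℓ x * g x| ^ p)) ^ (1 / p)

/-- The weighted lattice norm `‖f‖_{L^p_ℓ(εℤ²)} = (ε² Σ_{z∈εℤ²} |ρ_ℓ(z) f(z)|^p)^{1/p}`,
valued in `ℝ≥0∞`. -/
noncomputable def lpNormLat (p ℓ ε : ℝ) (f : ℤ × ℤ → ℝ) : ℝ≥0∞ :=
  (ENNReal.ofReal (ε ^ 2) *
    ∑' n : ℤ × ℤ, ENNReal.ofReal (|rho2 ℓ (pt ε n) * f n| ^ p)) ^ (1 / p)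

/-- The Euclidean length of a point of `ℝ²`. -/
noncomputable def en2 (y : ℝ × ℝ) : ℝ := Real.sqrt (y.1 ^ 2 + y.2 ^ 2)

/-- The weighted lattice `L^p_ℓ` norm of the difference `f(·+k) − f`. -/
noncomputable def latDiffNorm (p ℓ ε : ℝ) (f : ℤ × ℤ → ℝ) (k : ℤ × ℤ) : ℝ≥0∞ :=
  (ENNReal.ofReal (ε ^ 2) *
    ∑' n : ℤ × ℤ, ENNReal.ofReal (rho2 ℓ (pt ε n) ^ p * |f (n + k) - f n| ^ p)) ^ (1 / p)

/-- The lattice fractional Sobolev norm `‖f‖_{W^{s,p}_ℓ(εℤ²)} = ‖f‖_{L^p_ℓ(εℤ²)} +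
sup{ |k|^{-s} ‖f(·+k) − f‖_{L^p_ℓ(εℤ²)} : k ∈ εℤ², 0 < |k| ≤ 1 }`. -/
noncomputable def latWNorm (s p ℓ ε : ℝ) (f : ℤ × ℤ → ℝ) : ℝ≥0∞ :=
  lpNormLat p ℓ ε f +
    ⨆ (k : ℤ × ℤ) (_ : 0 < en2 (pt ε k) ∧ en2 (pt ε k) ≤ 1),
      ENNReal.ofReal (en2 (pt ε k) ^ (-s)) * latDiffNorm p ℓ ε f k

/-- The difference-quotient norm of the weighted Besov space `B^s_{p,∞,ℓ}(ℝ²)`: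
`‖g‖_{L^p_ℓ} + sup{ |h|^{-s} ‖g(·+h) − g‖_{L^p_ℓ} : h ∈ ℝ², 0 < |h| ≤ 1 }`. -/
noncomputable def besovDiffNormR2 (s p ℓ : ℝ) (g : ℝ × ℝ → ℝ) : ℝ≥0∞ :=
  lpNormR2 p ℓ g +
    ⨆ (h : ℝ × ℝ) (_ : 0 < en2 h ∧ en2 h ≤ 1),
      ENNReal.ofReal (en2 h ^ (-s)) * lpNormR2 p ℓ (fun x => g (x + h) - g x)

/-- The nearest-neighbour difference-quotient norm
`N(f) = ‖f‖_{L^p_ℓ(εℤ²)} + (ε² Σ_{x∈εℤ²} Σ_{i=1,2} ρ_ℓ(x)^p ε^{-p}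
|f(x+εe_i) − f(x)|^p)^{1/p}`. -/
noncomputable def nnQuotNorm (p ℓ ε : ℝ) (f : ℤ × ℤ → ℝ) : ℝ≥0∞ :=
  lpNormLat p ℓ ε f +
    (ENNReal.ofReal (ε ^ 2) *
      ∑' n : ℤ × ℤ,
        (ENNReal.ofReal (rho2 ℓ (pt ε n) ^ p * ε ^ (-p) * |f (n + (1, 0)) - f n| ^ p) +
          ENNReal.ofReal (rho2 ℓ (pt ε n) ^ p * ε ^ (-p) * |f (n + (0, 1)) - f n| ^ p))) ^
      (1 / p)

/-- Lattice `L^p` norm of a nonnegative function. -/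
noncomputable def auxG (p ε : ℝ) (g : ℤ × ℤ → ℝ≥0∞) : ℝ≥0∞ :=
  (ENNReal.ofReal (ε ^ 2) * ∑' n : ℤ × ℤ, g n ^ p) ^ (1 / p)

theorem auxG_mono {p ε : ℝ} (hp : 1 < p) {g h : ℤ × ℤ → ℝ≥0∞} (H : ∀ n, g n ≤ h n) :
    auxG p ε g ≤ auxG p ε h := by
  unfold auxG
  apply ENNReal.rpow_le_rpow _ (by positivity)
  gcongr with n
  exact H n

theorem auxG_add {p ε : ℝ} (hp : 1 < p) (g h : ℤ × ℤ → ℝ≥0∞) :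
    auxG p ε (fun n => g n + h n) ≤ auxG p ε g + auxG p ε h := by
  unfold auxG
  have h0 : (0:ℝ) ≤ 1 / p := by positivity
  simp only [ENNReal.mul_rpow_of_nonneg _ _ h0]
  rw [← mul_add]
  gcongr
  have := ENNReal.lintegral_Lp_add_le (μ := (Measure.count : Measure (ℤ × ℤ))) (f := g) (g := h)
    (measurable_of_countable _).aemeasurable (measurable_of_countable _).aemeasurable hp.le
  simpa [lintegral_count] using this

theorem auxG_smul {p ε : ℝ} (hp : 1 < p) (c : ℝ≥0∞) (g : ℤ × ℤ → ℝ≥0∞) :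
    auxG p ε (fun n => c * g n) = c * auxG p ε g := by
  unfold auxG
  have h0 : (0:ℝ) ≤ 1 / p := by positivity
  have h1 : (0:ℝ) ≤ p := by positivity
  simp only [ENNReal.mul_rpow_of_nonneg _ _ h1]
  rw [ENNReal.tsum_mul_left, mul_left_comm, ENNReal.mul_rpow_of_nonneg _ _ h0,
    ← ENNReal.rpow_mul, mul_one_div_cancel (by positivity), ENNReal.rpow_one]

theorem auxG_shift (p ε : ℝ) (g : ℤ × ℤ → ℝ≥0∞) (m : ℤ × ℤ) :
    auxG p ε (fun n => g (n + m)) = auxG p ε g := by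
  unfold auxG
  congr 2
  exact (Equiv.addRight m).tsum_eq (fun n => g n ^ p)

theorem rho2_pos (ℓ : ℝ) (y : ℝ × ℝ) : 0 < rho2 ℓ y := by
  unfold rho2; positivity

theorem latDiff_eq {p : ℝ} (hp : 1 < p) (ℓ ε : ℝ) (f : ℤ × ℤ → ℝ) (k : ℤ × ℤ) :
    latDiffNorm p ℓ ε f k =
      auxG p ε (fun n => ENNReal.ofReal (rho2 ℓ (pt ε n) * |f (n + k) - f n|)) := by
  unfold latDiffNorm auxG
  congr 3
  ext n
  rw [ENNReal.ofReal_rpow_of_nonneg (mul_nonneg (rho2_pos _ _).le (abs_nonneg _)) (by positivity),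
    Real.mul_rpow (rho2_pos _ _).le (abs_nonneg _)]

/-- The doubling constant of the weight. -/
noncomputable def auxK (ℓ : ℝ) : ℝ := 3 ^ (|ℓ| / 2)

theorem auxK_one (ℓ : ℝ) : 1 ≤ auxK ℓ :=
  Real.one_le_rpow (by norm_num) (by positivity)

theorem rpow_cmp {A B : ℝ} (hA : 0 < A) (hB : 0 < B) (h1 : A ≤ 3 * B) (h2 : B ≤ 3 * A) (s : ℝ) :
    A ^ s ≤ 3 ^ |s| * B ^ s := by
  rcases le_total 0 s with hs | hs
  · rw [abs_of_nonneg hs, ← Real.mul_rpow (by norm_num) hB.le]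
    exact Real.rpow_le_rpow hA.le h1 hs
  · have h3 : (3 * A) ^ s ≤ B ^ s := Real.rpow_le_rpow_of_nonpos hB h2 hs
    rw [Real.mul_rpow (by norm_num) hA.le] at h3
    rw [abs_of_nonpos hs]
    calc A ^ s = 3 ^ (-s) * (3 ^ s * A ^ s) := by
          rw [← mul_assoc, ← Real.rpow_add (by norm_num)]; simp
      _ ≤ _ := by gcongr

theorem rho2_cmp (ℓ ε : ℝ) (n m : ℤ × ℤ) (hm : en2 (pt ε m) ≤ 1) :
    rho2 ℓ (pt ε n) ≤ auxK ℓ * rho2 ℓ (pt ε (n + m)) := by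
  unfold rho2 auxK
  have e : |ℓ| / 2 = |-ℓ / 2| := by rw [abs_div, abs_neg]; norm_num
  rw [e]
  unfold en2 pt at hm
  rw [Real.sqrt_le_iff, one_pow] at hm
  replace hm := hm.2
  simp only [pt, Prod.fst_add, Prod.snd_add, Int.cast_add, mul_add] at *
  generalize ε * (n.1 : ℝ) = a at *
  generalize ε * (n.2 : ℝ) = b at *
  generalize ε * (m.1 : ℝ) = c at *
  generalize ε * (m.2 : ℝ) = d at *
  apply rpow_cmp (by positivity) (by positivity)
  · nlinarith [sq_nonneg (a + 2 * c), sq_nonneg (b + 2 * d), sq_nonneg (2 * a + 3 * c),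
      sq_nonneg (2 * b + 3 * d)]
  · nlinarith [sq_nonneg (a - c), sq_nonneg (b - d)]

theorem latDiff_shift {p : ℝ} (hp : 1 < p) (ℓ ε : ℝ) (f : ℤ × ℤ → ℝ) (m k : ℤ × ℤ)
    (hm : en2 (pt ε m) ≤ 1) :
    auxG p ε (fun n => ENNReal.ofReal (rho2 ℓ (pt ε n) * |f (n + m + k) - f (n + m)|)) ≤
      ENNReal.ofReal (auxK ℓ) * latDiffNorm p ℓ ε f k := by
  rw [latDiff_eq hp, ← auxG_shift p ε
    (fun n => ENNReal.ofReal (rho2 ℓ (pt ε n) * |f (n + k) - f n|)) m, ← auxG_smul hp]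
  apply auxG_mono hp
  intro n
  have hK := auxK_one ℓ
  rw [← ENNReal.ofReal_mul (by linarith)]
  apply ENNReal.ofReal_le_ofReal
  rw [← mul_assoc]
  exact mul_le_mul_of_nonneg_right (rho2_cmp ℓ ε n m hm) (abs_nonneg _)

theorem latDiff_add {p : ℝ} (hp : 1 < p) (ℓ ε : ℝ) (f : ℤ × ℤ → ℝ) (a b : ℤ × ℤ)
    (ha : en2 (pt ε a) ≤ 1) :
    latDiffNorm p ℓ ε f (a + b) ≤
      latDiffNorm p ℓ ε f a + ENNReal.ofReal (auxK ℓ) * latDiffNorm p ℓ ε f b := by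
  refine le_trans ?_ (add_le_add_right (latDiff_shift hp ℓ ε f a b ha) _)
  rw [latDiff_eq hp, latDiff_eq hp]
  refine le_trans ?_ (auxG_add hp _ _)
  apply auxG_mono hp
  intro n
  have h := (rho2_pos ℓ (pt ε n)).le
  rw [← ENNReal.ofReal_add (by positivity) (by positivity), ← mul_add]
  apply ENNReal.ofReal_le_ofReal
  apply mul_le_mul_of_nonneg_left _ h
  rw [← add_assoc n a b, add_comm |f (n + a) - f n|]
  exact abs_sub_le _ _ _

theorem latDiff_neg {p : ℝ} (hp : 1 < p) (ℓ ε : ℝ) (f : ℤ × ℤ → ℝ) (a : ℤ × ℤ)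
    (ha : en2 (pt ε a) ≤ 1) :
    latDiffNorm p ℓ ε f (-a) ≤ ENNReal.ofReal (auxK ℓ) * latDiffNorm p ℓ ε f a := by
  have ha' : en2 (pt ε (-a)) ≤ 1 := by
    refine le_trans (le_of_eq ?_) ha
    simp [en2, pt]
  refine le_trans (le_of_eq ?_) (latDiff_shift hp ℓ ε f (-a) a ha')
  rw [latDiff_eq hp]
  congr 1
  ext n
  rw [neg_add_cancel_right, abs_sub_comm]

theorem latDiff_zero {p : ℝ} (hp : 1 < p) (ℓ ε : ℝ) (f : ℤ × ℤ → ℝ) :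
    latDiffNorm p ℓ ε f 0 = 0 := by
  have : 0 < p := by linarith
  simp [latDiffNorm, Real.zero_rpow this.ne', this]

theorem en2_nsmul (ε : ℝ) (j : ℕ) (v : ℤ × ℤ) :
    en2 (pt ε (j • v)) = j * en2 (pt ε v) := by
  unfold en2 pt
  rw [← Real.sqrt_sq (Nat.cast_nonneg j : (0:ℝ) ≤ j), ← Real.sqrt_mul (sq_nonneg _)]
  congr 1
  simp
  ring

theorem latDiff_nsmul {p : ℝ} (hp : 1 < p) (ℓ ε : ℝ) (f : ℤ × ℤ → ℝ) (v : ℤ × ℤ) (j : ℕ)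
    (hj : en2 (pt ε (j • v)) ≤ 1) :
    latDiffNorm p ℓ ε f (j • v) ≤ j * (ENNReal.ofReal (auxK ℓ) * latDiffNorm p ℓ ε f v) := by
  induction j with
  | zero => simp [latDiff_zero hp]
  | succ j ih =>
    have h0 : 0 ≤ en2 (pt ε v) := Real.sqrt_nonneg _
    have hj' : en2 (pt ε (j • v)) ≤ 1 := by
      rw [en2_nsmul] at hj ⊢
      push_cast at hj
      nlinarith
    rw [succ_nsmul]
    refine (latDiff_add hp ℓ ε f _ _ hj').trans ?_
    push_cast
    rw [add_mul, one_mul]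
    gcongr
    exact ih hj'

theorem latDiff_zsmul {p : ℝ} (hp : 1 < p) (ℓ ε : ℝ) (f : ℤ × ℤ → ℝ) (v : ℤ × ℤ) (j : ℤ)
    (hv : en2 (pt ε v) ≤ 1) (hj : en2 (pt ε (j • v)) ≤ 1) :
    latDiffNorm p ℓ ε f (j • v) ≤
      ENNReal.ofReal |(j : ℝ)| * (ENNReal.ofReal (auxK ℓ ^ 2) * latDiffNorm p ℓ ε f v) := by
  have hK := auxK_one ℓ
  have hK1 : ENNReal.ofReal (auxK ℓ) * latDiffNorm p ℓ ε f v ≤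
      ENNReal.ofReal (auxK ℓ ^ 2) * latDiffNorm p ℓ ε f v := by
    gcongr
    nlinarith
  obtain ⟨m, rfl | rfl⟩ := j.eq_nat_or_neg
  · rw [natCast_zsmul] at hj ⊢
    refine (latDiff_nsmul hp ℓ ε f v m hj).trans ?_
    simp only [Int.cast_natCast, Nat.abs_cast, ENNReal.ofReal_natCast]
    gcongr
  · rw [neg_smul, natCast_zsmul, ← smul_neg] at hj ⊢
    refine (latDiff_nsmul hp ℓ ε f (-v) m hj).trans ?_
    simp only [Int.cast_neg, Int.cast_natCast, abs_neg, Nat.abs_cast, ENNReal.ofReal_natCast]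
    apply mul_le_mul_right
    rw [pow_two, ENNReal.ofReal_mul (by linarith), mul_assoc]
    gcongr
    exact latDiff_neg hp ℓ ε f v hv

theorem en2_fst {ε : ℝ} (hε : 0 < ε) (k : ℤ × ℤ) : |(k.1 : ℝ)| ≤ ε⁻¹ * en2 (pt ε k) := by
  rw [le_inv_mul_iff₀ hε]
  unfold en2 pt
  rw [← abs_of_pos hε, ← abs_mul, abs_of_pos hε]
  apply Real.abs_le_sqrt
  nlinarith [sq_nonneg (ε * (k.2 : ℝ))]

theorem en2_snd {ε : ℝ} (hε : 0 < ε) (k : ℤ × ℤ) : |(k.2 : ℝ)| ≤ ε⁻¹ * en2 (pt ε k) := by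
  rw [le_inv_mul_iff₀ hε]
  unfold en2 pt
  rw [← abs_of_pos hε, ← abs_mul, abs_of_pos hε]
  apply Real.abs_le_sqrt
  nlinarith [sq_nonneg (ε * (k.1 : ℝ))]

theorem en2_e1 {ε : ℝ} (hε : 0 < ε) : en2 (pt ε (1, 0)) = ε := by
  simp [en2, pt, Real.sqrt_sq hε.le]

theorem en2_e2 {ε : ℝ} (hε : 0 < ε) : en2 (pt ε (0, 1)) = ε := by
  simp [en2, pt, Real.sqrt_sq hε.le]

theorem latDiff_bound {p : ℝ} (hp : 1 < p) (ℓ : ℝ) {ε : ℝ} (hε : 0 < ε) (hε1 : ε ≤ 1)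
    (f : ℤ × ℤ → ℝ) (k : ℤ × ℤ) (hk0 : 0 < en2 (pt ε k)) (hk : en2 (pt ε k) ≤ 1) :
    ENNReal.ofReal (en2 (pt ε k) ^ (-1 : ℝ)) * latDiffNorm p ℓ ε f k ≤
      ENNReal.ofReal (auxK ℓ ^ 3) *
        (ENNReal.ofReal ε⁻¹ * latDiffNorm p ℓ ε f (1, 0) +
          ENNReal.ofReal ε⁻¹ * latDiffNorm p ℓ ε f (0, 1)) := by
  have hK := auxK_one ℓ
  have e1 : k.1 • ((1, 0) : ℤ × ℤ) = (k.1, 0) := by simp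
  have e2 : k.2 • ((0, 1) : ℤ × ℤ) = (0, k.2) := by simp
  have b1 : en2 (pt ε (k.1, 0)) ≤ 1 := by
    refine le_trans ?_ hk
    unfold en2 pt
    apply Real.sqrt_le_sqrt
    have := sq_nonneg (ε * (k.2 : ℝ))
    simp
    linarith
  have b2 : en2 (pt ε (0, k.2)) ≤ 1 := by
    refine le_trans ?_ hk
    unfold en2 pt
    apply Real.sqrt_le_sqrt
    have := sq_nonneg (ε * (k.1 : ℝ))
    simp
    linarith
  have z1 := latDiff_zsmul hp ℓ ε f (1, 0) k.1 (by rw [en2_e1 hε]; exact hε1) (by rw [e1]; exact b1)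
  have z2 := latDiff_zsmul hp ℓ ε f (0, 1) k.2 (by rw [en2_e2 hε]; exact hε1) (by rw [e2]; exact b2)
  rw [e1] at z1
  rw [e2] at z2
  have z := latDiff_add hp ℓ ε f (k.1, 0) (0, k.2) b1
  have e3 : ((k.1, 0) : ℤ × ℤ) + (0, k.2) = k := by simp
  rw [e3] at z
  set r := en2 (pt ε k)
  set D1 := latDiffNorm p ℓ ε f (1, 0)
  set D2 := latDiffNorm p ℓ ε f (0, 1)
  have m1 : ENNReal.ofReal |(k.1 : ℝ)| ≤ ENNReal.ofReal r * ENNReal.ofReal ε⁻¹ := by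
    rw [← ENNReal.ofReal_mul hk0.le, mul_comm]
    exact ENNReal.ofReal_le_ofReal (en2_fst hε k)
  have m2 : ENNReal.ofReal |(k.2 : ℝ)| ≤ ENNReal.ofReal r * ENNReal.ofReal ε⁻¹ := by
    rw [← ENNReal.ofReal_mul hk0.le, mul_comm]
    exact ENNReal.ofReal_le_ofReal (en2_snd hε k)
  have K3 : ENNReal.ofReal (auxK ℓ ^ 3) = ENNReal.ofReal (auxK ℓ) * ENNReal.ofReal (auxK ℓ ^ 2) := by
    rw [← ENNReal.ofReal_mul (by linarith)]
    congr 1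
    ring
  have K23 : ENNReal.ofReal (auxK ℓ ^ 2) ≤ ENNReal.ofReal (auxK ℓ ^ 3) :=
    ENNReal.ofReal_le_ofReal (pow_le_pow_right₀ hK (by norm_num))
  have rr : ENNReal.ofReal (r ^ (-1 : ℝ)) * ENNReal.ofReal r = 1 := by
    rw [← ENNReal.ofReal_mul (by positivity), Real.rpow_neg_one, inv_mul_cancel₀ hk0.ne',
      ENNReal.ofReal_one]
  calc ENNReal.ofReal (r ^ (-1 : ℝ)) * latDiffNorm p ℓ ε f k
      ≤ ENNReal.ofReal (r ^ (-1 : ℝ)) *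
        ((ENNReal.ofReal r * ENNReal.ofReal ε⁻¹) * (ENNReal.ofReal (auxK ℓ ^ 3) * D1) +
          ENNReal.ofReal (auxK ℓ) *
            ((ENNReal.ofReal r * ENNReal.ofReal ε⁻¹) * (ENNReal.ofReal (auxK ℓ ^ 2) * D2))) := by
        gcongr
        refine z.trans ?_
        gcongr
        · exact z1.trans (by gcongr)
        · exact z2.trans (by gcongr)
    _ = (ENNReal.ofReal (r ^ (-1 : ℝ)) * ENNReal.ofReal r) *
        (ENNReal.ofReal (auxK ℓ ^ 3) * (ENNReal.ofReal ε⁻¹ * D1 + ENNReal.ofReal ε⁻¹ * D2)) := by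
        rw [K3]; ring
    _ = _ := by rw [rr, one_mul]

/-- The nearest-neighbour seminorm. -/
noncomputable def auxS (p ℓ ε : ℝ) (f : ℤ × ℤ → ℝ) : ℝ≥0∞ :=
    (ENNReal.ofReal (ε ^ 2) *
      ∑' n : ℤ × ℤ,
        (ENNReal.ofReal (rho2 ℓ (pt ε n) ^ p * ε ^ (-p) * |f (n + (1, 0)) - f n| ^ p) +
          ENNReal.ofReal (rho2 ℓ (pt ε n) ^ p * ε ^ (-p) * |f (n + (0, 1)) - f n| ^ p))) ^
      (1 / p)

theorem auxS_eq {p : ℝ} (hp : 1 < p) (ℓ : ℝ) {ε : ℝ} (hε : 0 < ε) (f : ℤ × ℤ → ℝ) :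
    auxS p ℓ ε f = ((ENNReal.ofReal ε⁻¹ * latDiffNorm p ℓ ε f (1, 0)) ^ p +
      (ENNReal.ofReal ε⁻¹ * latDiffNorm p ℓ ε f (0, 1)) ^ p) ^ (1 / p) := by
  have hp0 : 0 < p := by linarith
  have key : ∀ k : ℤ × ℤ, (ENNReal.ofReal ε⁻¹ * latDiffNorm p ℓ ε f k) ^ p =
      ENNReal.ofReal (ε ^ 2) * ∑' n : ℤ × ℤ,
        ENNReal.ofReal (rho2 ℓ (pt ε n) ^ p * ε ^ (-p) * |f (n + k) - f n| ^ p) := by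
    intro k
    unfold latDiffNorm
    rw [ENNReal.mul_rpow_of_nonneg _ _ hp0.le, ← ENNReal.rpow_mul, one_div_mul_cancel hp0.ne',
      ENNReal.rpow_one, mul_left_comm, ← ENNReal.tsum_mul_left]
    congr 2
    ext n
    rw [ENNReal.ofReal_rpow_of_nonneg (by positivity) hp0.le, ← ENNReal.ofReal_mul (by positivity),
      Real.inv_rpow hε.le, ← Real.rpow_neg hε.le]
    congr 1
    ring
  rw [key, key, ← mul_add, ← ENNReal.tsum_add]
  rfl

theorem auxS_le {p : ℝ} (hp : 1 < p) (ℓ : ℝ) {ε : ℝ} (hε : 0 < ε) (f : ℤ × ℤ → ℝ) :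
    auxS p ℓ ε f ≤ ENNReal.ofReal ε⁻¹ * latDiffNorm p ℓ ε f (1, 0) +
      ENNReal.ofReal ε⁻¹ * latDiffNorm p ℓ ε f (0, 1) := by
  have hp0 : 0 < p := by linarith
  rw [auxS_eq hp ℓ hε]
  refine (ENNReal.rpow_add_le_add_rpow _ _ (by positivity)
    (by rw [div_le_one hp0]; exact hp.le)).trans (le_of_eq ?_)
  simp only [← ENNReal.rpow_mul, mul_one_div_cancel hp0.ne', ENNReal.rpow_one]

theorem le_auxS {p : ℝ} (hp : 1 < p) (ℓ : ℝ) {ε : ℝ} (hε : 0 < ε) (f : ℤ × ℤ → ℝ) :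
    ENNReal.ofReal ε⁻¹ * latDiffNorm p ℓ ε f (1, 0) ≤ auxS p ℓ ε f ∧
      ENNReal.ofReal ε⁻¹ * latDiffNorm p ℓ ε f (0, 1) ≤ auxS p ℓ ε f := by
  have hp0 : 0 < p := by linarith
  rw [auxS_eq hp ℓ hε, one_div, ENNReal.le_rpow_inv_iff hp0, ENNReal.le_rpow_inv_iff hp0]
  exact ⟨le_self_add, le_add_self⟩

/-- Remark 2.13: for every `p ∈ (1,∞)` and `ℓ ∈ ℝ` there are constants `0 < c ≤ C`
such that, uniformly in `ε ∈ (0,1]`, the lattice `W^{1,p}_ℓ(εℤ²)` norm is equivalent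
to the nearest-neighbour difference-quotient norm `N`:
`c N(f) ≤ ‖f‖_{W^{1,p}_ℓ(εℤ²)} ≤ C N(f)`. -/
theorem stmt_11 (p ℓ : ℝ) (hp : 1 < p) :
    ∃ c C : ℝ, 0 < c ∧ c ≤ C ∧
      ∀ ε : ℝ, ε ∈ Set.Ioc (0 : ℝ) 1 → ∀ f : ℤ × ℤ → ℝ,
        ENNReal.ofReal c * nnQuotNorm p ℓ ε f ≤ latWNorm 1 p ℓ ε f ∧
          latWNorm 1 p ℓ ε f ≤ ENNReal.ofReal C * nnQuotNorm p ℓ ε f := by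
  have hK := auxK_one ℓ
  have hK3 : 1 ≤ auxK ℓ ^ 3 := one_le_pow₀ hK
  refine ⟨1 / 2, 2 * auxK ℓ ^ 3, by norm_num, by linarith, ?_⟩
  rintro ε ⟨hε, hε1⟩ f
  have hN : nnQuotNorm p ℓ ε f = lpNormLat p ℓ ε f + auxS p ℓ ε f := rfl
  rw [hN]
  unfold latWNorm
  constructor
  · set M := ⨆ (k : ℤ × ℤ) (_ : 0 < en2 (pt ε k) ∧ en2 (pt ε k) ≤ 1),
      ENNReal.ofReal (en2 (pt ε k) ^ (-1 : ℝ)) * latDiffNorm p ℓ ε f k with hM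
    have h1 : ENNReal.ofReal ε⁻¹ * latDiffNorm p ℓ ε f (1, 0) ≤ M := by
      have := le_iSup₂_of_le (f := fun (k : ℤ × ℤ) (_ : 0 < en2 (pt ε k) ∧ en2 (pt ε k) ≤ 1) =>
        ENNReal.ofReal (en2 (pt ε k) ^ (-1 : ℝ)) * latDiffNorm p ℓ ε f k) (1, 0)
        (by rw [en2_e1 hε]; exact ⟨hε, hε1⟩) le_rfl
      rwa [en2_e1 hε, Real.rpow_neg_one] at this
    have h2 : ENNReal.ofReal ε⁻¹ * latDiffNorm p ℓ ε f (0, 1) ≤ M := by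
      have := le_iSup₂_of_le (f := fun (k : ℤ × ℤ) (_ : 0 < en2 (pt ε k) ∧ en2 (pt ε k) ≤ 1) =>
        ENNReal.ofReal (en2 (pt ε k) ^ (-1 : ℝ)) * latDiffNorm p ℓ ε f k) (0, 1)
        (by rw [en2_e2 hε]; exact ⟨hε, hε1⟩) le_rfl
      rwa [en2_e2 hε, Real.rpow_neg_one] at this
    have h3 : lpNormLat p ℓ ε f + auxS p ℓ ε f ≤ 2 * (lpNormLat p ℓ ε f + M) := by
      rw [mul_add]
      gcongr
      · rw [two_mul]; exact le_self_add
      · rw [two_mul]; exact (auxS_le hp ℓ hε f).trans (add_le_add h1 h2)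
    calc ENNReal.ofReal (1 / 2) * (lpNormLat p ℓ ε f + auxS p ℓ ε f)
        ≤ ENNReal.ofReal (1 / 2) * (2 * (lpNormLat p ℓ ε f + M)) := by gcongr
      _ = lpNormLat p ℓ ε f + M := by
        rw [← mul_assoc, ← ENNReal.ofReal_ofNat 2, ← ENNReal.ofReal_mul (by norm_num)]
        norm_num
  · rw [mul_add]
    apply add_le_add
    · exact le_mul_of_one_le_left zero_le (ENNReal.one_le_ofReal.2 (by linarith))
    · refine iSup₂_le fun k hk => ?_
      refine (latDiff_bound hp ℓ hε hε1 f k hk.1 hk.2).trans ?_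
      obtain ⟨s1, s2⟩ := le_auxS hp ℓ hε f
      refine (mul_le_mul_right (add_le_add s1 s2) _).trans (le_of_eq ?_)
      rw [mul_comm 2, ENNReal.ofReal_mul (by positivity), ENNReal.ofReal_ofNat, ← two_mul, mul_assoc]
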